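/- Fix n ≥ 3 and p prime. Consider a sequence (a_t)_{t ≥ -n+2} with a_t ∈ W_{n+t-1}(ℤ_(p)) for −n+2 ≤ t ≤ 0, i.e. a_{-n+2} ∈ W_1, a_{-n+3} ∈ W_2, …, a_{-1} ∈ W_{n-2}, and a_t ∈ W_{n-1} for all t ≥ 0, with a_t = 0 for all sufficiently large t. Suppose the relations p·a_s = R(a_{s+1}) for −n+2 ≤ s ≤ −1 and F(a_t) = R(a_{t+1}) for t ≥ 0 hold. Then p^{n-2} · Σ_t pr̄_last(a_t) = 0 in ℤ_(p), and hence Σ_t [pr̄_last(a_t)] = 0 in 𝔽_p. -/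

import Mathlib

instance Zp.isPrime (p : ℕ) [Fact p.Prime] : (Ideal.span {(p : ℤ)}).IsPrime := by
  rw [Ideal.span_singleton_prime (by exact_mod_cast (Fact.out : p.Prime).ne_zero)]
  exact Int.prime_iff_natAbs_prime.mpr (by simpa using (Fact.out : p.Prime))

/-- The localization `ℤ_(p)` of `ℤ` at the prime `p`. -/
abbrev Zp (p : ℕ) [Fact p.Prime] : Type := Localization.AtPrime (Ideal.span {(p : ℤ)})

/-- The Frobenius `F : W_{m+1}(ℤ_(p)) → W_m(ℤ_(p))` in coordinates with respect
to the basis `V^0(1), …`: `F(V^0(1)) = V^0(1)`, `F(V^i(1)) = p·V^{i-1}(1)`. -/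
def Wfrob (p : ℕ) [Fact p.Prime] (m : ℕ) (a : Fin (m + 1) → Zp p) : Fin m → Zp p :=
  fun j => if j.val = 0 then a 0 + (p : Zp p) * a j.succ else (p : Zp p) * a j.succ

/-- The restriction `R : W_{m+1}(ℤ_(p)) → W_m(ℤ_(p))`: kills `V^m(1)`. -/
def Wres (p : ℕ) [Fact p.Prime] (m : ℕ) (a : Fin (m + 1) → Zp p) : Fin m → Zp p :=
  fun j => a j.castSucc

/-- `pr̄_last : W_{m+1}(ℤ_(p)) → ℤ_(p)`, the coefficient of `V^m(1)`. -/
def WprBar (p : ℕ) [Fact p.Prime] (m : ℕ) (a : Fin (m + 1) → Zp p) : Zp p :=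
  a (Fin.last m)

theorem Zp.natCast_pow_mul_eq_zero {p : ℕ} [Fact p.Prime] {n : ℕ} {x : Zp p}
    (h : (p : Zp p) ^ n * x = 0) : x = 0 := by
  have hle : (Ideal.span {(p : ℤ)}).primeCompl ≤ nonZeroDivisors ℤ :=
    Ideal.primeCompl_le_nonZeroDivisors _
  have : IsDomain (Zp p) := IsLocalization.isDomain_localization hle
  have hp : (p : Zp p) ≠ 0 := by
    intro h0
    have hinj := IsLocalization.injective (Zp p) hle
    have : (p : ℤ) = 0 := hinj (by simpa using h0)
    exact (Fact.out : p.Prime).ne_zero (by exact_mod_cast this)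
  exact (mul_eq_zero.mp h).resolve_left (pow_ne_zero _ hp)

/-- Iterating `p·a_s = R(a_{s+1})` expresses every coordinate through a last coordinate. -/
theorem coord_eq_pow_mul_WprBar {p : ℕ} [Fact p.Prime] {k : ℕ}
    {b : ∀ m : ℕ, Fin (m + 1) → Zp p}
    (h1 : ∀ m < k, (fun j => (p : Zp p) * b m j) = Wres p (m + 1) (b (m + 1)))
    (j d : ℕ) (hd : j + d ≤ k) :
    b (j + d) ⟨j, by omega⟩ = (p : Zp p) ^ d * WprBar p j (b j) := by
  induction d with
  | zero => simp [WprBar, Fin.last]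
  | succ d ih =>
    have h := congrFun (h1 (j + d) (by omega)) ⟨j, by omega⟩
    simp only [Wres, Fin.castSucc_mk, ih (by omega)] at h
    rw [pow_succ', mul_assoc, h]
    rfl

theorem pow_mul_initial_coord {p : ℕ} [Fact p.Prime] {k : ℕ}
    {b : ∀ m : ℕ, Fin (m + 1) → Zp p} {c₀ : Fin (k + 2) → Zp p}
    (h1 : ∀ m < k, (fun j => (p : Zp p) * b m j) = Wres p (m + 1) (b (m + 1)))
    (h2 : (fun j => (p : Zp p) * b k j) = Wres p (k + 1) c₀)
    (j : ℕ) (hj : j ≤ k) :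
    (p : Zp p) ^ j * c₀ ⟨j, by omega⟩ = (p : Zp p) ^ (k + 1) * WprBar p j (b j) := by
  obtain ⟨d, rfl⟩ := Nat.exists_eq_add_of_le hj
  have h := congrFun h2 ⟨j, by omega⟩
  simp only [Wres, Fin.castSucc_mk, coord_eq_pow_mul_WprBar h1 j d le_rfl] at h
  rw [← h]
  ring

/-- Telescoping `F(a_t) = R(a_{t+1})` one coordinate at a time. -/
theorem pow_mul_sum_add_pow_mul_sum_eq_zero {p : ℕ} [Fact p.Prime] {k : ℕ}
    {b : ∀ m : ℕ, Fin (m + 1) → Zp p} {c : ℕ → Fin (k + 2) → Zp p}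
    (h1 : ∀ m < k, (fun j => (p : Zp p) * b m j) = Wres p (m + 1) (b (m + 1)))
    (h2 : (fun j => (p : Zp p) * b k j) = Wres p (k + 1) (c 0))
    (h3 : ∀ t : ℕ, Wfrob p (k + 1) (c t) = Wres p (k + 1) (c (t + 1)))
    {T : ℕ} (hT : c T = 0) (m : ℕ) (hm : m ≤ k) :
    (p : Zp p) ^ (k + 1) * ∑ j ∈ Finset.range (m + 1), WprBar p j (b j) +
      (p : Zp p) ^ (m + 1) * ∑ t ∈ Finset.range T, c t ⟨m + 1, by omega⟩ = 0 := by
  induction m with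
  | zero =>
    have hstep (t : ℕ) : (p : Zp p) * c t ⟨1, by omega⟩ = c (t + 1) 0 - c t 0 := by
      have h := congrFun (h3 t) 0
      simp only [Wfrob, Wres, Fin.val_zero, if_true, Fin.castSucc_zero] at h
      rw [← h]
      exact (add_sub_cancel_left _ _).symm
    have hc := pow_mul_initial_coord h1 h2 0 hm
    have hs := Finset.sum_range_sub (fun t => c t 0) T
    simp only [← hstep, ← Finset.mul_sum, hT, Pi.zero_apply] at hs
    simp only [zero_add, Finset.sum_range_one, pow_one, ← hc, hs, pow_zero, one_mul]
    rw [zero_sub]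
    exact add_neg_cancel _
  | succ m ih =>
    have hstep (t : ℕ) : (p : Zp p) * c t ⟨m + 1 + 1, by omega⟩ = c (t + 1) ⟨m + 1, by omega⟩ := by
      have h := congrFun (h3 t) ⟨m + 1, by omega⟩
      simpa [Wfrob, Wres] using h
    have hc := pow_mul_initial_coord h1 h2 (m + 1) hm
    have hs := Finset.sum_range_sub (fun t => c t ⟨m + 1, by omega⟩) T
    simp only [Finset.sum_sub_distrib, ← hstep, ← Finset.mul_sum, hT, Pi.zero_apply] at hs
    rw [Finset.sum_range_succ]
    linear_combination ih (by omega) - hc + (p : Zp p) ^ (m + 1) * hs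

/-- with `n = k + 3 ≥ 3`: given `a_{-n+2} ∈ W_1, …, a_{-1} ∈ W_{n-2}`
(here `b 0, …, b k`) and `a_t ∈ W_{n-1}` for `t ≥ 0` (here `c t`), eventually zero,
satisfying `p·a_s = R(a_{s+1})` for `s < 0` and `F(a_t) = R(a_{t+1})` for `t ≥ 0`,
we have `p^{n-2} · Σ_t pr̄_last(a_t) = 0` in `ℤ_(p)`; hence the sum of the mod `p`
reductions vanishes, i.e. `Σ_t pr̄_last(a_t)` is divisible by `p` in `ℤ_(p)`. -/
theorem stmt12 (p : ℕ) [Fact p.Prime] (k : ℕ)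
    (b : ∀ m : ℕ, Fin (m + 1) → Zp p)
    (c : ℕ → Fin (k + 2) → Zp p)
    (h1 : ∀ m < k, (fun j => (p : Zp p) * b m j) = Wres p (m + 1) (b (m + 1)))
    (h2 : (fun j => (p : Zp p) * b k j) = Wres p (k + 1) (c 0))
    (h3 : ∀ t : ℕ, Wfrob p (k + 1) (c t) = Wres p (k + 1) (c (t + 1)))
    (T : ℕ) (hT : ∀ t ≥ T, c t = 0) :
    (p : Zp p) ^ (k + 1) *
        ((∑ m ∈ Finset.range (k + 1), WprBar p m (b m)) +
          ∑ t ∈ Finset.range T, WprBar p (k + 1) (c t)) = 0 ∧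
    ∃ z : Zp p,
      ((∑ m ∈ Finset.range (k + 1), WprBar p m (b m)) +
          ∑ t ∈ Finset.range T, WprBar p (k + 1) (c t)) = (p : Zp p) * z := by
  have h := pow_mul_sum_add_pow_mul_sum_eq_zero h1 h2 h3 (hT T le_rfl) k le_rfl
  rw [← mul_add] at h
  exact ⟨h, 0, (Zp.natCast_pow_mul_eq_zero h).trans (mul_zero _).symm⟩
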